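/- Let ρ be the Gaussian measure on ℝ^d with mean μ and covariance Σ = LLᵀ, realized as the law of μ + L·Z where the coordinates of Z are i.i.d. standard normal. Let H ∈ ℝ^{d'×d}, R ∈ ℝ^{d'×d'} symmetric positive definite, β ∈ ℝ^{d'}, and define h(x) := (1/2)(Hx − β)ᵀ R⁻¹ (Hx − β), A := Hᵀ R⁻¹ H, B := Hᵀ R⁻¹, and Ω := μμᵀ. Then for every y ∈ ℝ^d, ∫ (⟨x,y⟩ + 1)² ( h(x) − ∫ h dρ ) dρ(x) = yᵀ( Σ A Σ + Ω A Σ + Σ A Ω − μ (Σ B β)ᵀ − (Σ B β) μᵀ ) y + 2 yᵀ( Σ A μ − Σ B β ). -/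

import Mathlib

open MeasureTheory Matrix ProbabilityTheory

/-- The standard Gaussian measure on `ℝ^d`, with i.i.d. standard normal coordinates. -/
noncomputable def stdGaussianPi (d : ℕ) : Measure (Fin d → ℝ) :=
  Measure.pi fun _ : Fin d => gaussianReal 0 1

/-!
The integral is the covariance of `(⟨X, y⟩ + 1)²` and `h(X)` for the Gaussian vector `X = μ + LZ`,
a combination of covariances `Cov(U², YZ)` in which `U`, `Y`, `Z` are jointly Gaussian.
The identity `12 u² y² = (u + y)⁴ + (u - y)⁴ - 2 u⁴ - 2 y⁴` reduces `E[U² Y²]` to fourth moments of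
real Gaussians, which gives `Cov(U², Y²) = 2 Cov(U, Y)² + 4 E[U] E[Y] Cov(U, Y)`, and polarizing
in `Y` gives `Cov(U², YZ) = 2 Cov(U, Y) Cov(U, Z) + 2 E[U] (E[Y] Cov(U, Z) + E[Z] Cov(U, Y))`.
The moments of `N(m, v)` come from its moment generating function, which solves
`f' = (m + v t) f`.
-/

open scoped ContDiff in
lemma iteratedDeriv_add_two_of_hasDerivAt_affine_mul {f : ℝ → ℝ} {m v : ℝ}
    (hf : ∀ t, HasDerivAt f ((m + v * t) * f t) t) (hf' : ContDiff ℝ ∞ f) (n : ℕ) (t : ℝ) :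
    iteratedDeriv (n + 2) f t
      = (m + v * t) * iteratedDeriv (n + 1) f t + (n + 1) * v * iteratedDeriv n f t := by
  have hderiv (k : ℕ) (t : ℝ) :
      HasDerivAt (iteratedDeriv k f) (iteratedDeriv (k + 1) f t) t := by
    rw [iteratedDeriv_succ]
    exact (hf'.differentiable_iteratedDeriv k (mod_cast WithTop.coe_lt_top _) t).hasDerivAt
  have haffine (t : ℝ) : HasDerivAt (fun t => m + v * t) v t := by
    simpa using ((hasDerivAt_id t).const_mul v).const_add m
  induction n generalizing t with
  | zero =>
    have hfirst : iteratedDeriv 1 f = fun t => (m + v * t) * f t := by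
      rw [iteratedDeriv_one]
      exact funext fun t => (hf t).deriv
    have hsecond := (haffine t).fun_mul (hf t)
    rw [← hfirst] at hsecond
    simp only [(hderiv 1 t).unique hsecond, hfirst, iteratedDeriv_zero]
    push_cast
    ring
  | succ n ih =>
    have hstep := ((haffine t).fun_mul (hderiv (n + 1) t)).fun_add
      ((hderiv n t).const_mul ((n + 1) * v))
    rw [← funext ih] at hstep
    rw [(hderiv (n + 2) t).unique hstep]
    push_cast
    ring

lemma integral_pow_add_two_gaussianReal (m : ℝ) (v : NNReal) (n : ℕ) :
    ∫ x, x ^ (n + 2) ∂(gaussianReal m v)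
      = m * ∫ x, x ^ (n + 1) ∂(gaussianReal m v)
        + (n + 1) * v * ∫ x, x ^ n ∂(gaussianReal m v) := by
  have hmoment (k : ℕ) : ∫ x, x ^ k ∂(gaussianReal m v)
      = iteratedDeriv k (fun t : ℝ => Real.exp (m * t + v * t ^ 2 / 2)) 0 := by
    rw [← mgf_id_gaussianReal, iteratedDeriv_mgf_zero (by simp)]
    rfl
  have hmgf (t : ℝ) : HasDerivAt (fun t : ℝ => Real.exp (m * t + v * t ^ 2 / 2))
      ((m + v * t) * Real.exp (m * t + v * t ^ 2 / 2)) t := by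
    have hexponent : HasDerivAt (fun t : ℝ => m * t + v * t ^ 2 / 2) (m + v * t) t := by
      refine (((hasDerivAt_id' t).const_mul m).fun_add
        (((hasDerivAt_pow 2 t).const_mul (v : ℝ)).div_const 2)).congr_deriv ?_
      push_cast
      ring
    simpa only [mul_comm] using hexponent.exp
  simpa only [hmoment, mul_zero, add_zero] using
    iteratedDeriv_add_two_of_hasDerivAt_affine_mul hmgf (by fun_prop) n 0

lemma integral_sq_gaussianReal (m : ℝ) (v : NNReal) :
    ∫ x, x ^ 2 ∂(gaussianReal m v) = m ^ 2 + v := by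
  rw [integral_pow_add_two_gaussianReal m v 0]
  simp only [zero_add, pow_one, integral_id_gaussianReal, Nat.cast_zero, one_mul, pow_zero,
    integral_const, probReal_univ, smul_eq_mul, mul_one]
  ring

lemma integral_pow_four_gaussianReal (m : ℝ) (v : NNReal) :
    ∫ x, x ^ 4 ∂(gaussianReal m v) = m ^ 4 + 6 * m ^ 2 * v + 3 * v ^ 2 := by
  rw [integral_pow_add_two_gaussianReal m v 2, integral_pow_add_two_gaussianReal m v 1,
    integral_sq_gaussianReal]
  simp only [Nat.cast_one, pow_one, integral_id_gaussianReal, Nat.cast_ofNat]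
  ring

section FourthMoments

variable {Ω : Type*} {mΩ : MeasurableSpace Ω} {P : Measure Ω} {X Y Z : Ω → ℝ}

lemma memLp_two_mul_of_memLp_four (hX : MemLp X 4 P) (hY : MemLp Y 4 P) :
    MemLp (fun ω => X ω * Y ω) 2 P := by
  have : ENNReal.HolderTriple 4 4 2 := ⟨by
    rw [← ENNReal.toReal_eq_toReal_iff' (by simp) (by simp), ENNReal.toReal_add (by simp) (by simp)]
    norm_num⟩
  exact hY.mul hX

lemma memLp_two_sq_of_memLp_four (hX : MemLp X 4 P) : MemLp (fun ω => X ω ^ 2) 2 P := by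
  simpa only [sq] using memLp_two_mul_of_memLp_four hX hX

lemma integral_sq_mul_sq_of_memLp_four (hX : MemLp X 4 P) (hY : MemLp Y 4 P) :
    12 * ∫ ω, X ω ^ 2 * Y ω ^ 2 ∂P
      = ∫ ω, (X ω + Y ω) ^ 4 ∂P + ∫ ω, (X ω - Y ω) ^ 4 ∂P
        - 2 * (∫ ω, X ω ^ 4 ∂P + ∫ ω, Y ω ^ 4 ∂P) := by
  have hpow {Z : Ω → ℝ} (hZ : MemLp Z 4 P) : Integrable (fun ω => Z ω ^ 4) P := by
    simpa only [← pow_mul] using (memLp_two_sq_of_memLp_four hZ).integrable_sq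
  have hpolar (ω : Ω) : 12 * (X ω ^ 2 * Y ω ^ 2)
      = ((X ω + Y ω) ^ 4 + (X ω - Y ω) ^ 4) - 2 * (X ω ^ 4 + Y ω ^ 4) := by ring
  have hadd : Integrable (fun ω => (X ω + Y ω) ^ 4) P := hpow (hX.add hY)
  have hsub : Integrable (fun ω => (X ω - Y ω) ^ 4) P := hpow (hX.sub hY)
  rw [← integral_const_mul, funext hpolar,
    integral_sub (hadd.fun_add hsub) (((hpow hX).fun_add (hpow hY)).const_mul 2),
    integral_add hadd hsub, integral_const_mul, integral_add (hpow hX) (hpow hY)]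

lemma integral_pow_four_of_hasGaussianLaw (hX : HasGaussianLaw X P) :
    ∫ ω, X ω ^ 4 ∂P = P[X] ^ 4 + 6 * P[X] ^ 2 * Var[X; P] + 3 * Var[X; P] ^ 2 := by
  have h := integral_pow_four_gaussianReal P[X] Var[X; P].toNNReal
  rwa [← hX.map_eq_gaussianReal, integral_map hX.aemeasurable (by fun_prop),
    Real.coe_toNNReal _ (variance_nonneg X P)] at h

lemma covariance_sq_sq_of_hasGaussianLaw (hXY : HasGaussianLaw (fun ω => (X ω, Y ω)) P) :
    cov[fun ω => X ω ^ 2, fun ω => Y ω ^ 2; P]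
      = 2 * cov[X, Y; P] ^ 2 + 4 * P[X] * P[Y] * cov[X, Y; P] := by
  have := hXY.isProbabilityMeasure
  have hX := hXY.fst
  have hY := hXY.snd
  have hX4 : MemLp X 4 P := hX.memLp (by simp)
  have hY4 : MemLp Y 4 P := hY.memLp (by simp)
  have hsecond {Z : Ω → ℝ} (hZ : HasGaussianLaw Z P) :
      ∫ ω, Z ω ^ 2 ∂P = Var[Z; P] + P[Z] ^ 2 := by
    simp [variance_eq_sub hZ.memLp_two]
  have hpolar := integral_sq_mul_sq_of_memLp_four hX4 hY4
  rw [integral_pow_four_of_hasGaussianLaw hXY.fun_add,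
    integral_pow_four_of_hasGaussianLaw hXY.fun_sub, integral_pow_four_of_hasGaussianLaw hX,
    integral_pow_four_of_hasGaussianLaw hY, variance_fun_add hX.memLp_two hY.memLp_two,
    variance_fun_sub hX.memLp_two hY.memLp_two, integral_add hX.integrable hY.integrable,
    integral_sub hX.integrable hY.integrable] at hpolar
  rw [covariance_eq_sub (memLp_two_sq_of_memLp_four hX4) (memLp_two_sq_of_memLp_four hY4),
    hsecond hX, hsecond hY]
  simp only [Pi.mul_apply]
  linear_combination hpolar / 12

lemma covariance_sq_mul_of_hasGaussianLaw
    (hXYZ : HasGaussianLaw (fun ω => (X ω, Y ω, Z ω)) P) :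
    cov[fun ω => X ω ^ 2, fun ω => Y ω * Z ω; P]
      = 2 * cov[X, Y; P] * cov[X, Z; P]
        + 2 * P[X] * (P[Y] * cov[X, Z; P] + P[Z] * cov[X, Y; P]) := by
  have := hXYZ.isProbabilityMeasure
  have hX := hXYZ.fst
  have hY := hXYZ.snd.fst
  have hZ := hXYZ.snd.snd
  have hadd : HasGaussianLaw (fun ω => (X ω, Y ω + Z ω)) P :=
    hXYZ.map_fun ((ContinuousLinearMap.fst ℝ ℝ (ℝ × ℝ)).prod
      ((ContinuousLinearMap.fst ℝ ℝ ℝ + ContinuousLinearMap.snd ℝ ℝ ℝ) ∘L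
        ContinuousLinearMap.snd ℝ ℝ (ℝ × ℝ)))
  have hsub : HasGaussianLaw (fun ω => (X ω, Y ω - Z ω)) P :=
    hXYZ.map_fun ((ContinuousLinearMap.fst ℝ ℝ (ℝ × ℝ)).prod
      ((ContinuousLinearMap.fst ℝ ℝ ℝ - ContinuousLinearMap.snd ℝ ℝ ℝ) ∘L
        ContinuousLinearMap.snd ℝ ℝ (ℝ × ℝ)))
  have hsq {W : Ω → ℝ} (hW : HasGaussianLaw W P) : MemLp (fun ω => W ω ^ 2) 2 P :=
    memLp_two_sq_of_memLp_four (hW.memLp (by simp))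
  have hpolar : (fun ω => Y ω * Z ω)
      = fun ω => ((Y ω + Z ω) ^ 2 - (Y ω - Z ω) ^ 2) / 4 := by
    funext ω
    ring
  have hcov_add : cov[X, fun ω => Y ω + Z ω; P] = cov[X, Y; P] + cov[X, Z; P] :=
    covariance_add_right hX.memLp_two hY.memLp_two hZ.memLp_two
  rw [hpolar, covariance_fun_div_right,
    covariance_fun_sub_right (hsq hX) (hsq hadd.snd) (hsq hsub.snd),
    covariance_sq_sq_of_hasGaussianLaw hadd, covariance_sq_sq_of_hasGaussianLaw hsub,
    hcov_add, covariance_fun_sub_right hX.memLp_two hY.memLp_two hZ.memLp_two,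
    integral_add hY.integrable hZ.integrable, integral_sub hY.integrable hZ.integrable]
  ring

end FourthMoments

lemma dotProduct_mulVec_comm_of_isSymm {ι : Type*} [Fintype ι] {W : Matrix ι ι ℝ}
    (hW : W.IsSymm) (u v : ι → ℝ) : u ⬝ᵥ W *ᵥ v = v ⬝ᵥ W *ᵥ u := by
  simpa only [hW.eq] using dotProduct_transpose_mulVec W u v

section RandomVectors

variable {Ω ι κ : Type*} {mΩ : MeasurableSpace Ω} {P : Measure Ω}

/-- The mean vector of a random vector `X`, with coordinates `E[X i]`. -/
noncomputable def meanVector (X : Ω → ι → ℝ) (P : Measure Ω) : ι → ℝ :=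
  fun i => ∫ ω, X ω i ∂P

/-- The covariance matrix of a random vector `X`, with entries `Cov(X i, X j)`. -/
noncomputable def covarianceMatrix (X : Ω → ι → ℝ) (P : Measure Ω) : Matrix ι ι ℝ :=
  Matrix.of fun i j => cov[fun ω => X ω i, fun ω => X ω j; P]

lemma isSymm_covarianceMatrix (X : Ω → ι → ℝ) : (covarianceMatrix X P).IsSymm :=
  Matrix.IsSymm.ext fun _ _ => covariance_comm _ _

variable [Fintype ι]

lemma integral_dotProduct {X : Ω → ι → ℝ} (hX : ∀ i, Integrable (fun ω => X ω i) P)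
    (u : ι → ℝ) : ∫ ω, u ⬝ᵥ X ω ∂P = u ⬝ᵥ meanVector X P := by
  simp only [dotProduct, meanVector]
  rw [integral_finsetSum _ fun i _ => (hX i).const_mul (u i)]
  simp only [integral_const_mul]

lemma covariance_dotProduct_dotProduct [IsFiniteMeasure P] {X : Ω → ι → ℝ}
    (hX : ∀ i, MemLp (fun ω => X ω i) 2 P) (u w : ι → ℝ) :
    cov[fun ω => u ⬝ᵥ X ω, fun ω => w ⬝ᵥ X ω; P] = u ⬝ᵥ covarianceMatrix X P *ᵥ w := by
  simp only [dotProduct, mulVec, covarianceMatrix, of_apply]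
  rw [covariance_fun_sum_fun_sum (fun i => (hX i).const_mul (u i)) fun j => (hX j).const_mul (w j)]
  simp only [covariance_const_mul_left, covariance_const_mul_right, Finset.mul_sum]
  exact Finset.sum_congr rfl fun i _ => Finset.sum_congr rfl fun j _ => by ring

lemma meanVector_const_add_mulVec [IsProbabilityMeasure P] {X : Ω → ι → ℝ}
    (hX : ∀ i, Integrable (fun ω => X ω i) P) (b : κ → ℝ) (M : Matrix κ ι ℝ) :
    meanVector (fun ω => b + M *ᵥ X ω) P = b + M *ᵥ meanVector X P := by
  funext k
  have hint : Integrable (fun ω => (M *ᵥ X ω) k) P :=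
    integrable_finsetSum _ fun i _ => (hX i).const_mul (M k i)
  simp only [meanVector, Pi.add_apply]
  rw [integral_add (integrable_const _) hint, integral_const, probReal_univ, one_smul]
  exact congrArg (b k + ·) (integral_dotProduct hX (M k))

lemma covarianceMatrix_const_add_mulVec [IsProbabilityMeasure P] {X : Ω → ι → ℝ}
    (hX : ∀ i, MemLp (fun ω => X ω i) 2 P) (b : κ → ℝ) (M : Matrix κ ι ℝ) :
    covarianceMatrix (fun ω => b + M *ᵥ X ω) P = M * covarianceMatrix X P * Mᵀ := by
  ext k l
  have hint (k : κ) : Integrable (fun ω => (M *ᵥ X ω) k) P :=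
    integrable_finsetSum _ fun i _ => ((hX i).integrable one_le_two).const_mul (M k i)
  simp only [covarianceMatrix, of_apply, Pi.add_apply]
  rw [covariance_const_add_left (hint k), covariance_const_add_right (hint l), Matrix.mul_assoc]
  exact covariance_dotProduct_dotProduct hX (M k) (M l)

lemma hasGaussianLaw_const_add {E : Type*} [NormedAddCommGroup E] [NormedSpace ℝ E]
    [MeasurableSpace E] [BorelSpace E] [SecondCountableTopology E] {X : Ω → E}
    (hX : HasGaussianLaw X P) (b : E) : HasGaussianLaw (fun ω => b + X ω) P := by
  have := hX.isGaussian_map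
  refine ⟨?_⟩
  rw [← Function.comp_def (b + ·), ← AEMeasurable.map_map_of_aemeasurable (by fun_prop)
    hX.aemeasurable]
  infer_instance

lemma hasGaussianLaw_affine_prodMk [Finite κ] {X : Ω → ι → ℝ} (hX : HasGaussianLaw X P)
    (a : ℝ) (u : ι → ℝ) (b : κ → ℝ) (M : Matrix κ ι ℝ) :
    HasGaussianLaw (fun ω => (a + u ⬝ᵥ X ω, b + M *ᵥ X ω)) P := by
  cases nonempty_fintype κ
  exact hasGaussianLaw_const_add (hX.map_fun (LinearMap.toContinuousLinearMap
    ((dotProductBilin ℝ ℝ u).prod M.mulVecLin))) (a, b)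

lemma hasGaussianLaw_const_add_mulVec [Finite κ] {X : Ω → ι → ℝ} (hX : HasGaussianLaw X P)
    (b : κ → ℝ) (M : Matrix κ ι ℝ) : HasGaussianLaw (fun ω => b + M *ᵥ X ω) P := by
  cases nonempty_fintype κ
  exact (hasGaussianLaw_affine_prodMk hX 0 0 b M).snd

lemma integral_mul_sub_integral_eq_covariance [IsProbabilityMeasure P] {f g : Ω → ℝ}
    (hf : MemLp f 2 P) (hg : MemLp g 2 P) :
    ∫ ω, f ω * (g ω - ∫ ω', g ω' ∂P) ∂P = cov[f, g; P] := by
  have hfg : Integrable (fun ω => f ω * g ω) P := hf.integrable_mul hg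
  simp only [mul_sub]
  rw [integral_sub hfg ((hf.integrable one_le_two).mul_const _), integral_mul_const,
    covariance_eq_sub hf hg]
  rfl

lemma memLp_two_dotProduct_mulVec_of_memLp_four {Y : Ω → ι → ℝ}
    (hY : ∀ k, MemLp (fun ω => Y ω k) 4 P) (W : Matrix ι ι ℝ) :
    MemLp (fun ω => Y ω ⬝ᵥ W *ᵥ Y ω) 2 P := by
  have hW (k : ι) : MemLp (fun ω => (W *ᵥ Y ω) k) 4 P :=
    memLp_finsetSum _ fun l _ => (hY l).const_mul (W k l)
  exact memLp_finsetSum _ fun k _ => memLp_two_mul_of_memLp_four (hY k) (hW k)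

lemma covariance_sq_quadraticForm_of_hasGaussianLaw {U : Ω → ℝ} {Y : Ω → ι → ℝ}
    (hUY : HasGaussianLaw (fun ω => (U ω, Y ω)) P) {c : ι → ℝ}
    (hc : ∀ k, cov[U, fun ω => Y ω k; P] = c k) (W : Matrix ι ι ℝ) :
    cov[fun ω => U ω ^ 2, fun ω => Y ω ⬝ᵥ W *ᵥ Y ω; P]
      = 2 * (c ⬝ᵥ W *ᵥ c)
        + 2 * P[U] * (meanVector Y P ⬝ᵥ W *ᵥ c + c ⬝ᵥ W *ᵥ meanVector Y P) := by
  have := hUY.isProbabilityMeasure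
  have hcoord (k : ι) : MemLp (fun ω => Y ω k) 4 P := (hUY.snd.eval k).memLp (by simp)
  have hprod (k l : ι) : MemLp (fun ω => W k l * (Y ω k * Y ω l)) 2 P :=
    (memLp_two_mul_of_memLp_four (hcoord k) (hcoord l)).const_mul _
  have hU : MemLp (fun ω => U ω ^ 2) 2 P :=
    memLp_two_sq_of_memLp_four (hUY.fst.memLp (by simp))
  have hentry (k l : ι) : cov[fun ω => U ω ^ 2, fun ω => Y ω k * Y ω l; P]
      = 2 * c k * c l + 2 * P[U] * (meanVector Y P k * c l + meanVector Y P l * c k) := by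
    rw [← hc, ← hc]
    exact covariance_sq_mul_of_hasGaussianLaw (hUY.map_fun
      ((ContinuousLinearMap.fst ℝ ℝ (ι → ℝ)).prod
        (((ContinuousLinearMap.proj k).prod (ContinuousLinearMap.proj l)) ∘L
          ContinuousLinearMap.snd ℝ ℝ (ι → ℝ))))
  have hexpand (v w : ι → ℝ) : v ⬝ᵥ W *ᵥ w = ∑ k, ∑ l, W k l * (v k * w l) := by
    simp only [dotProduct, mulVec, Finset.mul_sum, mul_left_comm]
  simp only [hexpand]
  rw [covariance_fun_sum_right (fun k => memLp_finsetSum _ fun l _ => hprod k l) hU]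
  simp only [covariance_fun_sum_right (hprod _) hU, covariance_const_mul_right, hentry,
    Finset.mul_sum, ← Finset.sum_add_distrib]
  exact Finset.sum_congr rfl fun k _ => Finset.sum_congr rfl fun l _ => by ring

lemma covariance_affine_sq_quadraticForm_of_hasGaussianLaw [Fintype κ] {X : Ω → ι → ℝ}
    (hX : HasGaussianLaw X P) (a : ℝ) (u : ι → ℝ) (b : κ → ℝ) (M : Matrix κ ι ℝ)
    {W : Matrix κ κ ℝ} (hW : W.IsSymm) :
    cov[fun ω => (a + u ⬝ᵥ X ω) ^ 2, fun ω => (b + M *ᵥ X ω) ⬝ᵥ W *ᵥ (b + M *ᵥ X ω); P]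
      = 2 * (M *ᵥ covarianceMatrix X P *ᵥ u ⬝ᵥ W *ᵥ M *ᵥ covarianceMatrix X P *ᵥ u)
        + 4 * (a + u ⬝ᵥ meanVector X P)
          * (M *ᵥ covarianceMatrix X P *ᵥ u ⬝ᵥ W *ᵥ (b + M *ᵥ meanVector X P)) := by
  have := hX.isProbabilityMeasure
  have hX2 (i : ι) : MemLp (fun ω => X ω i) 2 P := (hX.eval i).memLp_two
  have hX1 (i : ι) : Integrable (fun ω => X ω i) P := (hX.eval i).integrable
  have hint (v : ι → ℝ) : Integrable (fun ω => v ⬝ᵥ X ω) P :=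
    integrable_finsetSum _ fun i _ => (hX1 i).const_mul (v i)
  have hmean : ∫ ω, (a + u ⬝ᵥ X ω) ∂P = a + u ⬝ᵥ meanVector X P := by
    rw [integral_add (integrable_const a) (hint u), integral_dotProduct hX1]
    simp
  have hcross (k : κ) : cov[fun ω => a + u ⬝ᵥ X ω, fun ω => (b + M *ᵥ X ω) k; P]
      = (M *ᵥ covarianceMatrix X P *ᵥ u) k := by
    rw [covariance_const_add_left (hint u), covariance_comm]
    exact (covariance_const_add_left (hint (M k)) (b k)).trans
      (covariance_dotProduct_dotProduct hX2 (M k) u)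
  rw [covariance_sq_quadraticForm_of_hasGaussianLaw (hasGaussianLaw_affine_prodMk hX a u b M)
      hcross, hmean, meanVector_const_add_mulVec hX1,
    dotProduct_mulVec_comm_of_isSymm hW (b + M *ᵥ meanVector X P)]
  ring

end RandomVectors

lemma quadratic_add_cross_term_eq_dotProduct_mulVec {ι κ : Type*} [Fintype ι] [Fintype κ]
    {S : Matrix ι ι ℝ} (hS : S.IsSymm) {W : Matrix κ κ ℝ} (hW : W.IsSymm) (H : Matrix κ ι ℝ)
    (m : ι → ℝ) (β : κ → ℝ) (c : ℝ) (y : ι → ℝ) :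
    H *ᵥ S *ᵥ y ⬝ᵥ W *ᵥ H *ᵥ S *ᵥ y
        + 2 * (c + y ⬝ᵥ m) * (H *ᵥ S *ᵥ y ⬝ᵥ W *ᵥ (-β + H *ᵥ m))
      = y ⬝ᵥ (S * (Hᵀ * W * H) * S + vecMulVec m m * (Hᵀ * W * H) * S
            + S * (Hᵀ * W * H) * vecMulVec m m
            - vecMulVec m ((S * (Hᵀ * W)) *ᵥ β) - vecMulVec ((S * (Hᵀ * W)) *ᵥ β) m) *ᵥ y
        + 2 * c * (y ⬝ᵥ ((S * (Hᵀ * W * H)) *ᵥ m - (S * (Hᵀ * W)) *ᵥ β)) := by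
  have hadjoint (w : κ → ℝ) : y ⬝ᵥ S *ᵥ Hᵀ *ᵥ w = H *ᵥ S *ᵥ y ⬝ᵥ w := by
    rw [dotProduct_mulVec_comm_of_isSymm hS, dotProduct_comm, dotProduct_transpose_mulVec,
      dotProduct_comm]
  have hmean (w : κ → ℝ) : m ⬝ᵥ Hᵀ *ᵥ w = H *ᵥ m ⬝ᵥ w := by
    rw [dotProduct_transpose_mulVec, dotProduct_comm]
  simp only [sub_mulVec, add_mulVec, ← mulVec_mulVec, vecMulVec_mulVec, op_smul_eq_smul,
    mulVec_add, mulVec_neg, mulVec_smul, dotProduct_add, dotProduct_sub, dotProduct_neg,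
    dotProduct_smul, smul_eq_mul, hadjoint, hmean, dotProduct_comm _ y,
    dotProduct_mulVec_comm_of_isSymm hW (H *ᵥ m)]
  ring

instance isProbabilityMeasure_stdGaussianPi (d : ℕ) :
    IsProbabilityMeasure (stdGaussianPi d) :=
  inferInstanceAs (IsProbabilityMeasure (Measure.pi fun _ : Fin d => gaussianReal 0 1))

lemma iIndepFun_eval_stdGaussianPi (d : ℕ) :
    iIndepFun (fun i (z : Fin d → ℝ) => z i) (stdGaussianPi d) :=
  iIndepFun_pi (X := fun _ : Fin d => (id : ℝ → ℝ)) fun _ => aemeasurable_id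

lemma measurePreserving_eval_stdGaussianPi {d : ℕ} (i : Fin d) :
    MeasurePreserving (fun z => z i) (stdGaussianPi d) (gaussianReal 0 1) :=
  measurePreserving_eval (fun _ : Fin d => gaussianReal 0 1) i

lemma hasGaussianLaw_eval_stdGaussianPi {d : ℕ} (i : Fin d) :
    HasGaussianLaw (fun z => z i) (stdGaussianPi d) where
  isGaussian_map := by
    rw [(measurePreserving_eval_stdGaussianPi i).map_eq]
    infer_instance

lemma hasGaussianLaw_stdGaussianPi (d : ℕ) : HasGaussianLaw (fun z => z) (stdGaussianPi d) :=
  (iIndepFun_eval_stdGaussianPi d).hasGaussianLaw hasGaussianLaw_eval_stdGaussianPi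

lemma meanVector_stdGaussianPi (d : ℕ) : meanVector (fun z => z) (stdGaussianPi d) = 0 := by
  funext i
  exact (integral_comp_eval (μ := fun _ : Fin d => gaussianReal 0 1) (i := i) (f := fun x : ℝ => x)
    (by fun_prop)).trans integral_id_gaussianReal

lemma covarianceMatrix_stdGaussianPi (d : ℕ) :
    covarianceMatrix (fun z => z) (stdGaussianPi d) = 1 := by
  have hmemLp (i : Fin d) := (hasGaussianLaw_eval_stdGaussianPi i).memLp_two
  ext i j
  rcases eq_or_ne i j with rfl | hij
  · have hvar := (measurePreserving_eval_stdGaussianPi i).variance_fun_comp (f := fun x => x)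
      aemeasurable_id
    rw [variance_fun_id_gaussianReal] at hvar
    simpa [covarianceMatrix, covariance_self (hmemLp i).aemeasurable] using hvar
  · rw [one_apply_ne hij]
    exact ((iIndepFun_eval_stdGaussianPi d).indepFun hij).covariance_eq_zero (hmemLp i) (hmemLp j)

lemma meanVector_const_add_mulVec_stdGaussianPi {d : ℕ} {κ : Type*} (b : κ → ℝ)
    (L : Matrix κ (Fin d) ℝ) : meanVector (fun z => b + L *ᵥ z) (stdGaussianPi d) = b := by
  rw [meanVector_const_add_mulVec fun i => (hasGaussianLaw_eval_stdGaussianPi i).integrable,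
    meanVector_stdGaussianPi, mulVec_zero, add_zero]

lemma covarianceMatrix_const_add_mulVec_stdGaussianPi {d : ℕ} {κ : Type*} (b : κ → ℝ)
    (L : Matrix κ (Fin d) ℝ) :
    covarianceMatrix (fun z => b + L *ᵥ z) (stdGaussianPi d) = L * Lᵀ := by
  rw [covarianceMatrix_const_add_mulVec fun i => (hasGaussianLaw_eval_stdGaussianPi i).memLp_two,
    covarianceMatrix_stdGaussianPi, Matrix.mul_one]

theorem stmt14_general {Ω ι κ : Type*} {mΩ : MeasurableSpace Ω} {P : Measure Ω} [Fintype ι]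
    [Fintype κ] {X : Ω → ι → ℝ} (hX : HasGaussianLaw X P) {m : ι → ℝ} (hm : meanVector X P = m)
    {S : Matrix ι ι ℝ} (hS : covarianceMatrix X P = S) (H : Matrix κ ι ℝ) {W : Matrix κ κ ℝ}
    (hW : W.IsSymm) (β : κ → ℝ) (c : ℝ) (y : ι → ℝ) :
    ∫ ω, (X ω ⬝ᵥ y + c) ^ 2 * ((1 / 2) * ((H *ᵥ X ω - β) ⬝ᵥ W *ᵥ (H *ᵥ X ω - β))
        - ∫ ω', (1 / 2) * ((H *ᵥ X ω' - β) ⬝ᵥ W *ᵥ (H *ᵥ X ω' - β)) ∂P) ∂P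
      = y ⬝ᵥ (S * (Hᵀ * W * H) * S + vecMulVec m m * (Hᵀ * W * H) * S
            + S * (Hᵀ * W * H) * vecMulVec m m
            - vecMulVec m ((S * (Hᵀ * W)) *ᵥ β) - vecMulVec ((S * (Hᵀ * W)) *ᵥ β) m) *ᵥ y
        + 2 * c * (y ⬝ᵥ ((S * (Hᵀ * W * H)) *ᵥ m - (S * (Hᵀ * W)) *ᵥ β)) := by
  subst hm hS
  have := hX.isProbabilityMeasure
  have hlinear (ω : Ω) : X ω ⬝ᵥ y + c = c + y ⬝ᵥ X ω := by rw [dotProduct_comm, add_comm]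
  have hresidual (ω : Ω) : H *ᵥ X ω - β = -β + H *ᵥ X ω := sub_eq_neg_add _ _
  have hjoint := hasGaussianLaw_affine_prodMk hX c y (-β) H
  have hkernel := memLp_two_sq_of_memLp_four (hjoint.fst.memLp (by simp))
  have hquadratic := memLp_two_dotProduct_mulVec_of_memLp_four
    (fun k => (hjoint.snd.eval k).memLp (by simp)) W
  simp only [hlinear, hresidual]
  rw [integral_mul_sub_integral_eq_covariance hkernel (hquadratic.const_mul (1 / 2)),
    covariance_const_mul_right,
    covariance_affine_sq_quadraticForm_of_hasGaussianLaw hX c y (-β) H hW,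
    ← quadratic_add_cross_term_eq_dotProduct_mulVec (isSymm_covarianceMatrix X) hW]
  ring

/-- For a Gaussian measure `ρ = N(μ, Σ)` with `Σ = LLᵀ` (realized as the law
of `X = μ + LZ` under the standard Gaussian) and the quadratic negative log-likelihood
`h(x) = (1/2)(Hx-β)ᵀR⁻¹(Hx-β)`, writing `A = HᵀR⁻¹H`, `B = HᵀR⁻¹` and `Ω = μμᵀ`,
for every `y`: `∫ (⟨x,y⟩+1)² (h(x) - ∫h dρ) dρ(x)
= yᵀ(ΣAΣ + ΩAΣ + ΣAΩ - μ(ΣBβ)ᵀ - (ΣBβ)μᵀ)y + 2yᵀ(ΣAμ - ΣBβ)`. -/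
theorem stmt14 {d d' : ℕ} (μ : Fin d → ℝ) (L : Matrix (Fin d) (Fin d) ℝ)
    (H : Matrix (Fin d') (Fin d) ℝ) (R : Matrix (Fin d') (Fin d') ℝ)
    (hR : R.PosDef) (hRsymm : R.IsSymm) (β : Fin d' → ℝ) :
    ∀ y : Fin d → ℝ,
      (∫ z, ((μ + L.mulVec z) ⬝ᵥ y + 1) ^ 2 *
          ((1 / 2) * ((H.mulVec (μ + L.mulVec z) - β) ⬝ᵥ
              R⁻¹.mulVec (H.mulVec (μ + L.mulVec z) - β))
            - ∫ z', (1 / 2) * ((H.mulVec (μ + L.mulVec z') - β) ⬝ᵥ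
                R⁻¹.mulVec (H.mulVec (μ + L.mulVec z') - β)) ∂(stdGaussianPi d))
          ∂(stdGaussianPi d))
      = y ⬝ᵥ ((L * Lᵀ) * (Hᵀ * R⁻¹ * H) * (L * Lᵀ)
            + vecMulVec μ μ * (Hᵀ * R⁻¹ * H) * (L * Lᵀ)
            + (L * Lᵀ) * (Hᵀ * R⁻¹ * H) * vecMulVec μ μ
            - vecMulVec μ (((L * Lᵀ) * (Hᵀ * R⁻¹)).mulVec β)
            - vecMulVec (((L * Lᵀ) * (Hᵀ * R⁻¹)).mulVec β) μ).mulVec y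
        + 2 * (y ⬝ᵥ (((L * Lᵀ) * (Hᵀ * R⁻¹ * H)).mulVec μ
            - ((L * Lᵀ) * (Hᵀ * R⁻¹)).mulVec β)) := by
  intro y
  simpa only [mul_one] using stmt14_general
    (hasGaussianLaw_const_add_mulVec (hasGaussianLaw_stdGaussianPi d) μ L)
    (meanVector_const_add_mulVec_stdGaussianPi μ L)
    (covarianceMatrix_const_add_mulVec_stdGaussianPi μ L) H hRsymm.inv β 1 y
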